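/- arXiv:2206.05482 — 5 statements merged into one kernel-verified Lean document; each statement's English description precedes it below -/
import Mathlib

section
/- Let Â = A + εB be an n×n dual matrix and let X be the Moore–Penrose inverse of A (i.e. AXA = A, XAX = X, (AX)^T = AX, (XA)^T = XA). Then Â has dual index one if and only if rank(A²) = rank(A) and (Iₙ − AX)·B·(Iₙ − XA) = 0. -/
open Matrix

/-- The dual matrix `A + εB`, viewed as a matrix over the dual numbers `ℝ[ε]`. -/
def dm {n : ℕ} (A B : Matrix (Fin n) (Fin n) ℝ) :
    Matrix (Fin n) (Fin n) (DualNumber ℝ) :=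
  fun i j => TrivSqZeroExt.inl (A i j) + TrivSqZeroExt.inr (B i j)

/-- A dual matrix has dual index one iff its column space equals that of its square,
equivalently (as shown in the paper) there is a dual matrix `X` with `M² * X = M`. -/
def DualIndexOne {n : ℕ} (M : Matrix (Fin n) (Fin n) (DualNumber ℝ)) : Prop :=
  ∃ X : Matrix (Fin n) (Fin n) (DualNumber ℝ), M * M * X = M

/-- `G` is a group inverse of the real matrix `A`. -/
def IsGroupInv {n : ℕ} (A G : Matrix (Fin n) (Fin n) ℝ) : Prop :=
  A * G * A = A ∧ G * A * G = G ∧ A * G = G * A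

/-- `X` is the Moore–Penrose inverse of the real matrix `A`. -/
def IsMoorePenrose {n : ℕ} (A X : Matrix (Fin n) (Fin n) ℝ) : Prop :=
  A * X * A = A ∧ X * A * X = X ∧ (A * X)ᵀ = A * X ∧ (X * A)ᵀ = X * A

/-- `C` is a core inverse of the real matrix `A`. -/
def IsCoreInv {n : ℕ} (A C : Matrix (Fin n) (Fin n) ℝ) : Prop :=
  A * C * A = A ∧ A * (C * C) = C ∧ (A * C)ᵀ = A * C

/-- `G` is a dual group generalized inverse (DGGI) of the dual matrix `M`. -/
def IsDGGI {n : ℕ} (M G : Matrix (Fin n) (Fin n) (DualNumber ℝ)) : Prop :=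
  M * G * M = M ∧ G * M * G = G ∧ M * G = G * M

/-- `X` is a dual Moore–Penrose generalized inverse (DMPGI) of the dual matrix `M`. -/
def IsDMPGI {n : ℕ} (M X : Matrix (Fin n) (Fin n) (DualNumber ℝ)) : Prop :=
  M * X * M = M ∧ X * M * X = X ∧ (M * X)ᵀ = M * X ∧ (X * M)ᵀ = X * M

/-- `G` is a dual core generalized inverse (DCGI) of the dual matrix `M`. -/
def IsDCGI {n : ℕ} (M G : Matrix (Fin n) (Fin n) (DualNumber ℝ)) : Prop :=
  M * G * M = M ∧ M * (G * G) = G ∧ (M * G)ᵀ = M * G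

/-!
Comparing coefficients, `(A + εB)² (P + εQ) = A + εB` says `A²P = A` and
`A²Q + (AB + BA)P = B`. The first equation is solvable exactly when `rank A² = rank A`, and then
`LA² = A` for some `L` as well, so that `AP = LA`. Since `PX` is an inner inverse of `A²` with
`A²PX = AX`, the second equation is solvable in `Q` if and only if `(1 - AX)B(1 - LA) = 0`. Both
`L` and `X` are inner inverses of `A`, so this condition and `(1 - AX)B(1 - XA) = 0` express the
same thing: `(1 - AX)B` is a left multiple of `A`.
-/

open scoped DualNumber

theorem mul_eq_mul_of_sq_mul_eq_of_mul_sq_eq {S : Type*} [Semigroup S] {a p q : S}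
    (hp : a * a * p = a) (hq : q * (a * a) = a) : a * p = q * a :=
  calc a * p = q * (a * a) * p := by rw [hq]
    _ = q * (a * a * p) := mul_assoc _ _ _
    _ = q * a := by rw [hp]

section Ring

variable {R : Type*} [Ring R] {a b p q r x : R}

theorem exists_mul_eq_iff_one_sub_mul_eq_zero (hx : a * x * a = a) :
    (∃ d, a * d = r) ↔ (1 - a * x) * r = 0 := by
  rw [sub_mul, one_mul, sub_eq_zero]
  constructor
  · rintro ⟨d, rfl⟩
    rw [← mul_assoc, hx]
  · exact fun h ↦ ⟨x * r, by rw [← mul_assoc, ← h]⟩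

theorem exists_mul_eq_iff_mul_one_sub_eq_zero (hx : a * x * a = a) :
    (∃ d, d * a = r) ↔ r * (1 - x * a) = 0 := by
  rw [mul_sub, mul_one, sub_eq_zero]
  constructor
  · rintro ⟨d, rfl⟩
    rw [mul_assoc, ← mul_assoc a, hx]
  · exact fun h ↦ ⟨r * x, by rw [mul_assoc, ← h]⟩

theorem exists_sq_mul_add_eq_iff (hx : a * x * a = a) (hp : a * a * p = a)
    (hq : q * (a * a) = a) :
    (∃ d, a * a * d + (a * b + b * a) * p = b) ↔ (1 - a * x) * b * (1 - x * a) = 0 := by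
  have hpq : a * p = q * a := mul_eq_mul_of_sq_mul_eq_of_mul_sq_eq hp hq
  have hpx : a * a * (p * x) = a * x := by rw [← mul_assoc, hp]
  have sq_inner : a * a * (p * x) * (a * a) = a * a := by rw [hpx, ← mul_assoc, hx]
  have q_inner : a * q * a = a := by rw [mul_assoc, ← hpq, ← mul_assoc, hp]
  have residual : (1 - a * x) * (b - (a * b + b * a) * p) = (1 - a * x) * b * (1 - q * a) := by
    have annihilates : (1 - a * x) * a = 0 := by rw [sub_mul, one_mul, hx, sub_self]
    calc (1 - a * x) * (b - (a * b + b * a) * p)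
        = (1 - a * x) * b * (1 - a * p) - (1 - a * x) * a * (b * p) := by noncomm_ring
      _ = (1 - a * x) * b * (1 - q * a) := by rw [annihilates, zero_mul, sub_zero, hpq]
  calc (∃ d, a * a * d + (a * b + b * a) * p = b)
      ↔ ∃ d, a * a * d = b - (a * b + b * a) * p := by simp only [eq_sub_iff_add_eq]
    _ ↔ (1 - a * x) * b * (1 - q * a) = 0 := by
      rw [exists_mul_eq_iff_one_sub_mul_eq_zero sq_inner, hpx, residual]
    _ ↔ ∃ d, d * a = (1 - a * x) * b := (exists_mul_eq_iff_mul_one_sub_eq_zero q_inner).symm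
    _ ↔ (1 - a * x) * b * (1 - x * a) = 0 := exists_mul_eq_iff_mul_one_sub_eq_zero hx

end Ring

section Matrix

variable {l m n R K : Type*}

theorem range_mulVecLin_le_range_mulVecLin_iff [CommSemiring R] [Fintype l] [Fintype n]
    {A : Matrix m n R} {C : Matrix m l R} :
    LinearMap.range A.mulVecLin ≤ LinearMap.range C.mulVecLin ↔
      ∃ P : Matrix l n R, C * P = A := by
  constructor
  · intro h
    have col_mem (j : n) : ∃ v, C *ᵥ v = A.col j := by
      classical
      exact h ⟨Pi.single j 1, A.mulVec_single_one j⟩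
    choose v hv using col_mem
    exact ⟨(of v)ᵀ, ext_col hv⟩
  · rintro ⟨P, rfl⟩
    rw [mulVecLin_mul]
    exact LinearMap.range_comp_le_range _ _

variable [Field K] [Fintype m] [Fintype n]

theorem rank_mul_eq_left_iff_exists_mul_eq {A : Matrix l m K} {B : Matrix m n K} :
    (A * B).rank = A.rank ↔ ∃ P : Matrix n m K, A * B * P = A := by
  rw [← range_mulVecLin_le_range_mulVecLin_iff]
  have range_le : LinearMap.range (A * B).mulVecLin ≤ LinearMap.range A.mulVecLin :=
    range_mulVecLin_le_range_mulVecLin_iff.mpr ⟨B, rfl⟩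
  constructor
  · exact fun h ↦ (Submodule.eq_of_le_of_finrank_eq range_le h).ge
  · exact fun h ↦ (rank_mul_le_left A B).antisymm (Submodule.finrank_mono h)

theorem rank_mul_eq_right_iff_exists_mul_eq [Fintype l] {A : Matrix l m K} {B : Matrix m n K} :
    (A * B).rank = B.rank ↔ ∃ P : Matrix m l K, P * (A * B) = B := by
  rw [← rank_transpose (A * B), ← rank_transpose B, transpose_mul,
    rank_mul_eq_left_iff_exists_mul_eq, (transposeAddEquiv m l K).surjective.exists]
  simp only [transposeAddEquiv_apply, ← transpose_mul, transpose_inj]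

end Matrix

section DualMatrix

variable {l m n R : Type*} [Semiring R]

/-- The dual matrix `A + εB` with entries in `R[ε]`, for rectangular matrices over an arbitrary
semiring; for real square matrices `dualMatrix A B` unfolds to `dm A B`. -/
def dualMatrix (A B : Matrix m n R) : Matrix m n R[ε] :=
  A.map TrivSqZeroExt.inl + B.map TrivSqZeroExt.inr

theorem dualMatrix_inj {A B C D : Matrix m n R} :
    dualMatrix A B = dualMatrix C D ↔ A = C ∧ B = D := by
  simp [dualMatrix, ← Matrix.ext_iff, TrivSqZeroExt.ext_iff, forall_and]

theorem dualMatrix_map_fst_map_snd (M : Matrix m n R[ε]) :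
    dualMatrix (M.map TrivSqZeroExt.fst) (M.map TrivSqZeroExt.snd) = M := by
  ext i j <;> simp [dualMatrix]

theorem dualMatrix_mul_dualMatrix [Fintype m] (A B : Matrix l m R) (C D : Matrix m n R) :
    dualMatrix A B * dualMatrix C D = dualMatrix (A * C) (A * D + B * C) := by
  ext i j
  · simp [dualMatrix, mul_apply, TrivSqZeroExt.fst_sum]
  · simp [dualMatrix, mul_apply, TrivSqZeroExt.snd_sum, Finset.sum_add_distrib]

theorem exists_sq_mul_dualMatrix_eq_iff [Fintype n] {A B : Matrix n n R} :
    (∃ Y : Matrix n n R[ε], dualMatrix A B * dualMatrix A B * Y = dualMatrix A B) ↔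
      ∃ P : Matrix n n R, A * A * P = A ∧
        ∃ Q : Matrix n n R, A * A * Q + (A * B + B * A) * P = B := by
  constructor
  · rintro ⟨Y, hY⟩
    rw [← dualMatrix_map_fst_map_snd Y, dualMatrix_mul_dualMatrix, dualMatrix_mul_dualMatrix,
      dualMatrix_inj] at hY
    exact ⟨_, hY.1, _, hY.2⟩
  · rintro ⟨P, hP, Q, hQ⟩
    exact ⟨dualMatrix P Q, by
      rw [dualMatrix_mul_dualMatrix, dualMatrix_mul_dualMatrix, hP, hQ]⟩

end DualMatrix

theorem stmt2_general {K n : Type*} [Field K] [Fintype n] [DecidableEq n] (A B X : Matrix n n K)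
    (hX : A * X * A = A) :
    (∃ Y : Matrix n n K[ε], dualMatrix A B * dualMatrix A B * Y = dualMatrix A B) ↔
      (A * A).rank = A.rank ∧ (1 - A * X) * B * (1 - X * A) = 0 := by
  rw [exists_sq_mul_dualMatrix_eq_iff]
  constructor
  · rintro ⟨P, hP, hQ⟩
    have hr : (A * A).rank = A.rank := rank_mul_eq_left_iff_exists_mul_eq.mpr ⟨P, hP⟩
    obtain ⟨L, hL⟩ := rank_mul_eq_right_iff_exists_mul_eq.mp hr
    exact ⟨hr, (exists_sq_mul_add_eq_iff hX hP hL).mp hQ⟩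
  · rintro ⟨hr, hB⟩
    obtain ⟨P, hP⟩ := rank_mul_eq_left_iff_exists_mul_eq.mp hr
    obtain ⟨L, hL⟩ := rank_mul_eq_right_iff_exists_mul_eq.mp hr
    exact ⟨P, hP, (exists_sq_mul_add_eq_iff hX hP hL).mpr hB⟩

theorem stmt2 {n : ℕ} (A B X : Matrix (Fin n) (Fin n) ℝ)
    (hX : IsMoorePenrose A X) :
    DualIndexOne (dm A B) ↔
      (A * A).rank = A.rank ∧ (1 - A * X) * B * (1 - X * A) = 0 :=
  stmt2_general A B X hX.1
end

section
/- Let Â = A + εB be an n×n dual matrix. Then Â has dual index one if and only if there exists a real n×n matrix G that is a group inverse of A (so A has index one) and (Iₙ − A·G)·B·(Iₙ − A·G) = 0. -/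
open Matrix

/-! Comparing the two components of `(A + εB)² X = A + εB` turns the problem into one about `A` and
`B` in the matrix ring. The real component `A² X₀ = A` says that `A` maps its own column space onto
itself; the column space is finitely generated, so `A` is also injective on it, and `A X₀²` is then
a group inverse `G` of `A`. Now `P = 1 - AG` satisfies `PA = AP = 0`, and `A² X₁ + (AB + BA) G = B`
is solvable for `X₁` exactly when the obstruction `PBP` vanishes. -/

open TrivSqZeroExt

/-- `g` is a group inverse of `a`: the notion `IsGroupInv` of real matrices, for the elements of
any multiplicative structure. -/
def IsGroupInverse {M : Type*} [Mul M] (a g : M) : Prop :=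
  a * g * a = a ∧ g * a * g = g ∧ a * g = g * a

namespace IsGroupInverse

section Semigroup

variable {M : Type*} [Semigroup M] {a g : M}

lemma mul_self_mul (h : IsGroupInverse a g) : a * a * g = a := by
  rw [mul_assoc, h.2.2, ← mul_assoc, h.1]

lemma isIdempotentElem (h : IsGroupInverse a g) : IsIdempotentElem (a * g) := by
  rw [IsIdempotentElem, ← mul_assoc, h.1]

lemma mul_eq_mul_of_mul_self_mul_eq {x : M} (h : IsGroupInverse a g) (hx : a * a * x = a) :
    a * x = a * g :=
  calc a * x = g * (a * a * x) := by
        rw [← mul_assoc, ← mul_assoc, ← h.2.2, h.1]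
    _ = a * g := by rw [hx, h.2.2]

end Semigroup

section Ring

variable {S : Type*} [Ring S] {a g : S}

lemma one_sub_mul_mul_self (h : IsGroupInverse a g) : (1 - a * g) * a = 0 := by
  rw [sub_mul, one_mul, h.1, sub_self]

lemma one_sub_mul_mul_one_sub_eq_zero (h : IsGroupInverse a g) {b x y : S} (hx : a * a * x = a)
    (hy : a * a * y + (a * b + b * a) * x = b) : (1 - a * g) * b * (1 - a * g) = 0 := by
  have absorb : (1 - a * g) * b = (1 - a * g) * b * (a * g) :=
    calc (1 - a * g) * b = (1 - a * g) * (a * a * y + (a * b + b * a) * x) := by rw [hy]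
      _ = (1 - a * g) * a * (a * y + b * x) + (1 - a * g) * b * (a * x) := by noncomm_ring
      _ = (1 - a * g) * b * (a * g) := by
        rw [h.one_sub_mul_mul_self, zero_mul, zero_add, h.mul_eq_mul_of_mul_self_mul_eq hx]
  rw [absorb, mul_assoc, h.isIdempotentElem.mul_one_sub_self, mul_zero]

lemma exists_mul_self_mul_add_eq (h : IsGroupInverse a g) {b : S}
    (hb : (1 - a * g) * b * (1 - a * g) = 0) :
    ∃ y, a * a * y + (a * b + b * a) * g = b := by
  have fixed : a * g * (b * (1 - a * g)) = b * (1 - a * g) := by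
    rw [mul_assoc, sub_mul, one_mul, sub_eq_zero] at hb
    exact hb.symm
  -- The right-hand side `b - (ab + ba)g` equals `b(1 - ag) - abg`, which lies in the range of `a`,
  -- where `g²` inverts `a²`.
  refine ⟨g * g * (b * (1 - a * g) - a * b * g), ?_⟩
  calc a * a * (g * g * (b * (1 - a * g) - a * b * g)) + (a * b + b * a) * g
      = a * a * g * g * (b * (1 - a * g)) - a * a * g * g * a * b * g + (a * b + b * a) * g := by
        noncomm_ring
    _ = b * (1 - a * g) - a * b * g + (a * b + b * a) * g := by
        rw [h.mul_self_mul, fixed, h.1]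
    _ = b := by noncomm_ring

end Ring

end IsGroupInverse

lemma isGroupInverse_mul_mul_of_injOn {M : Type*} [Monoid M] {a x : M} (hx : a * a * x = a)
    (ha : Set.InjOn (a * ·) (Set.range (a * ·))) : IsGroupInverse a (a * x * x) := by
  have cancel {u v : M} (h : a * (a * u) = a * (a * v)) : a * u = a * v := ha ⟨u, rfl⟩ ⟨v, rfl⟩ h
  have haxa : a * (x * a) = a := by
    simpa only [mul_one] using
      cancel (u := x * a) (v := 1) (by simp only [← mul_assoc, hx, mul_one])
  have hxxa : a * (x * (x * a)) = a * x := cancel <| by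
    simp only [← mul_assoc, hx]
    rw [mul_assoc, haxa]
  have hleft : a * (a * x * x) = a * x := by simp only [← mul_assoc, hx]
  have hright : a * x * x * a = a * x := by simpa only [mul_assoc] using hxxa
  refine ⟨?_, ?_, hleft.trans hright.symm⟩
  · rw [hleft, mul_assoc, haxa]
  · calc a * x * x * a * (a * x * x) = a * (x * a) * x * x := by rw [hright]; simp only [mul_assoc]
      _ = a * x * x := by rw [haxa]

lemma injOn_range_of_range_le_range_comp_self {R M : Type*} [Semiring R] [OrzechProperty R]
    [AddCommMonoid M] [Module R M] [Module.Finite R M] {f : M →ₗ[R] M}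
    (hf : f.range ≤ (f ∘ₗ f).range) : Set.InjOn f (Set.range f) := by
  let restriction : f.range →ₗ[R] f.range := f.rangeRestrict ∘ₗ f.range.subtype
  have surjective : Function.Surjective restriction := by
    rintro ⟨y, hy⟩
    obtain ⟨x, rfl⟩ := hf hy
    exact ⟨⟨f x, x, rfl⟩, rfl⟩
  have injective := OrzechProperty.injective_of_surjective_endomorphism restriction surjective
  intro x hx y hy hxy
  exact congrArg Subtype.val (injective (a₁ := ⟨x, hx⟩) (a₂ := ⟨y, hy⟩) (Subtype.ext hxy))

lemma exists_isGroupInverse_of_mul_self_mul_eq (R : Type*) {S : Type*} [CommRing R] [Semiring S]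
    [Algebra R S] [Module.Finite R S] {a x : S} (hx : a * a * x = a) :
    ∃ g, IsGroupInverse a g := by
  have range_le : (LinearMap.mulLeft R a).range ≤
      (LinearMap.mulLeft R a ∘ₗ LinearMap.mulLeft R a).range := by
    rintro _ ⟨u, rfl⟩
    exact ⟨x * u, by simp only [LinearMap.comp_apply, LinearMap.mulLeft_apply, ← mul_assoc, hx]⟩
  exact ⟨_, isGroupInverse_mul_mul_of_injOn hx (injOn_range_of_range_le_range_comp_self range_le)⟩

theorem exists_mul_self_mul_eq_and_add_eq_iff (R : Type*) {S : Type*} [CommRing R] [Ring S]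
    [Algebra R S] [Module.Finite R S] (a b : S) :
    (∃ x y, a * a * x = a ∧ a * a * y + (a * b + b * a) * x = b) ↔
      ∃ g, IsGroupInverse a g ∧ (1 - a * g) * b * (1 - a * g) = 0 := by
  constructor
  · rintro ⟨x, y, hx, hy⟩
    obtain ⟨g, hg⟩ := exists_isGroupInverse_of_mul_self_mul_eq R hx
    exact ⟨g, hg, hg.one_sub_mul_mul_one_sub_eq_zero hx hy⟩
  · rintro ⟨g, hg, hb⟩
    obtain ⟨y, hy⟩ := hg.exists_mul_self_mul_add_eq hb
    exact ⟨g, y, hg.mul_self_mul, hy⟩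

section DualMatrix

variable {R l m n : Type*}

lemma exists_eq_map_inl_add_map_inr [AddZeroClass R] (X : Matrix m n (DualNumber R)) :
    ∃ C D : Matrix m n R, X = C.map inl + D.map inr :=
  ⟨X.map fst, X.map snd, Matrix.ext fun _ _ ↦ (inl_fst_add_inr_snd_eq _).symm⟩

lemma map_inl_add_map_inr_inj [AddZeroClass R] {A B C D : Matrix m n R} :
    (A.map inl + B.map inr : Matrix m n (DualNumber R)) = C.map inl + D.map inr ↔
      A = C ∧ B = D := by
  simp [← Matrix.ext_iff, TrivSqZeroExt.ext_iff, forall_and]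

lemma map_inl_add_map_inr_mul [Semiring R] [Fintype m] (A B : Matrix l m R) (C D : Matrix m n R) :
    (A.map inl + B.map inr : Matrix l m (DualNumber R)) * (C.map inl + D.map inr) =
      (A * C).map inl + (A * D + B * C).map inr := by
  ext i j
  · simp [Matrix.mul_apply, fst_sum]
  · simp [Matrix.mul_apply, snd_sum, Finset.sum_add_distrib]

end DualMatrix

theorem stmt3_general {R ι : Type*} [CommRing R] [Fintype ι] [DecidableEq ι] (A B : Matrix ι ι R) :
    (∃ X : Matrix ι ι (DualNumber R),
      (A.map inl + B.map inr) * (A.map inl + B.map inr) * X = A.map inl + B.map inr) ↔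
      ∃ G : Matrix ι ι R, IsGroupInverse A G ∧ (1 - A * G) * B * (1 - A * G) = 0 := by
  rw [← exists_mul_self_mul_eq_and_add_eq_iff R]
  constructor
  · rintro ⟨X, hX⟩
    obtain ⟨C, D, rfl⟩ := exists_eq_map_inl_add_map_inr X
    rw [map_inl_add_map_inr_mul, map_inl_add_map_inr_mul, map_inl_add_map_inr_inj] at hX
    exact ⟨C, D, hX⟩
  · rintro ⟨C, D, hCD⟩
    refine ⟨C.map inl + D.map inr, ?_⟩
    rwa [map_inl_add_map_inr_mul, map_inl_add_map_inr_mul, map_inl_add_map_inr_inj]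

theorem stmt3 {n : ℕ} (A B : Matrix (Fin n) (Fin n) ℝ) :
    DualIndexOne (dm A B) ↔
      ∃ G : Matrix (Fin n) (Fin n) ℝ, IsGroupInv A G ∧
        (1 - A * G) * B * (1 - A * G) = 0 :=
  stmt3_general A B
end

section
/- Let Â = A + εB be an n×n dual matrix. Then Â has dual index one if and only if rank(A²) = rank(A) and Â has a dual Moore–Penrose generalized inverse, i.e. there exists a dual matrix X̂ with ÂX̂Â = Â, X̂ÂX̂ = X̂, (ÂX̂)^T = ÂX̂ and (X̂Â)^T = X̂Â. -/
open Matrix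

/-!
Over `ℝ[ε]` the matrices `1 + XᵀX` are invertible, because their real parts are positive definite
and an element of `ℝ[ε]` with nonzero real part is a unit. Hence every idempotent has the same range
as an orthogonal projection, and every matrix `M` with an inner inverse (`MYM = M`) has a
Moore–Penrose inverse. If `M²X = M`, then `M` maps its range onto itself, hence injectively by the
Orzech property, and cancelling `M` from `M(MXM) = M(M)` yields `MXM = M`.

Conversely, let `MXM = M` and `A²P = A`, where `A` is the real part of `M`. Lift `P` to `Q` and put
`D = M - M²Q`, whose real part is zero. From `D = MXD = DXD + M²QXD` we get `D(1 - XD) = M²QXD`, and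
`1 - XD` is invertible, so `D`, and with it `M`, lies in the right ideal generated by `M²`.
-/

/-- `x` is a Moore–Penrose inverse of the element `a` of a ring with involution. For matrices the
involution is the conjugate transpose, hence the transpose when the scalars have trivial star. -/
structure IsMoorePenroseInverse {R : Type*} [Mul R] [Star R] (a x : R) : Prop where
  mul_mul_self : a * x * a = a
  self_mul_mul : x * a * x = x
  isSelfAdjoint_mul : IsSelfAdjoint (a * x)
  isSelfAdjoint_mul' : IsSelfAdjoint (x * a)

section StarRing

variable {R : Type*} [Ring R] [StarRing R]

theorem isUnit_add_star_sub_one (hR : ∀ x : R, IsUnit (1 + star x * x)) {e : R}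
    (he : IsIdempotentElem e) : IsUnit (e + star e - 1) := by
  have hsq : (e + star e - 1) ^ 2 = 1 + star (e - star e) * (e - star e) := by
    simp only [sq, star_sub, star_star, add_mul, mul_add, sub_mul, mul_sub, one_mul, mul_one,
      he.eq, he.star.eq]
    abel
  exact (isUnit_pow_iff two_ne_zero).1 (hsq ▸ hR (e - star e))

-- `w = e + star e - 1` intertwines `e` with `star e`, which makes `e * w⁻¹` self-adjoint.
theorem exists_isStarProjection_right_mul_eq (hR : ∀ x : R, IsUnit (1 + star x * x)) {e : R}
    (he : IsIdempotentElem e) : ∃ p, IsStarProjection p ∧ p * e = e ∧ e * p = p := by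
  obtain ⟨w, hw⟩ := isUnit_add_star_sub_one hR he
  have hwe : w * e = star e * e := by
    simp only [hw, sub_mul, add_mul, one_mul, he.eq, add_sub_cancel_left]
  have hew : star e * w = star e * e := by
    simp only [hw, mul_sub, mul_add, mul_one, he.star.eq, add_sub_cancel_right]
  have hwinv : ↑w⁻¹ * star e = e * ↑w⁻¹ :=
    SemiconjBy.units_inv_symm_left (hwe.trans hew.symm)
  have hw_star : star w = w := Units.ext <| by
    rw [Units.coe_star, hw, star_sub, star_add, star_star, star_one, add_comm]
  have hself : IsSelfAdjoint (e * ↑w⁻¹) := by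
    rw [isSelfAdjoint_iff, star_mul, ← Units.coe_star_inv, hw_star, hwinv]
  have hpe : e * ↑w⁻¹ * e = e := by
    rw [← hwinv, mul_assoc, ← hwe, Units.inv_mul_cancel_left]
  refine ⟨e * ↑w⁻¹, ⟨?_, hself⟩, hpe, by rw [← mul_assoc, he.eq]⟩
  rw [IsIdempotentElem, ← mul_assoc, hpe]

theorem exists_isStarProjection_left_mul_eq (hR : ∀ x : R, IsUnit (1 + star x * x)) {e : R}
    (he : IsIdempotentElem e) : ∃ q, IsStarProjection q ∧ e * q = e ∧ q * e = q := by
  obtain ⟨q, hq, hqe, heq⟩ := exists_isStarProjection_right_mul_eq hR he.star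
  refine ⟨q, hq, star_injective ?_, star_injective ?_⟩
  · rw [star_mul, hq.isSelfAdjoint.star_eq, hqe]
  · rw [star_mul, hq.isSelfAdjoint.star_eq, heq]

theorem exists_isMoorePenroseInverse (hR : ∀ x : R, IsUnit (1 + star x * x)) {a y : R}
    (h : a * y * a = a) : ∃ x, IsMoorePenroseInverse a x := by
  obtain ⟨p, hp, hpe, hep⟩ :=
    exists_isStarProjection_right_mul_eq hR (e := a * y) (by rw [IsIdempotentElem, ← mul_assoc, h])
  obtain ⟨q, hq, hfq, hqf⟩ :=
    exists_isStarProjection_left_mul_eq hR (e := y * a)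
      (by rw [IsIdempotentElem, mul_assoc, ← mul_assoc a, h])
  have hpa : p * a = a := by
    rw [← h, ← mul_assoc, hpe]
  have haq : a * q = a := by
    rw [← h, mul_assoc a, mul_assoc a, hfq]
  have hax : a * (q * y * p) = p := by
    rw [mul_assoc q, ← mul_assoc a, haq, ← mul_assoc, hep]
  have hxa : q * y * p * a = q := by
    rw [mul_assoc, hpa, mul_assoc, hqf]
  refine ⟨q * y * p, ?_, ?_, ?_, ?_⟩
  · rw [hax, hpa]
  · rw [hxa, ← mul_assoc, ← mul_assoc, hq.isIdempotentElem.eq]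
  · rw [hax]
    exact hp.isSelfAdjoint
  · rw [hxa]
    exact hq.isSelfAdjoint

end StarRing

theorem exists_mul_self_mul_eq_of_map {R S : Type*} [Ring R] [Ring S] (f : R →+* S)
    [IsLocalHom f] (hf : Function.Surjective f) {a x : R} (hx : a * x * a = a)
    (ha : ∃ s, f a * f a * s = f a) : ∃ y, a * a * y = a := by
  obtain ⟨s, hs⟩ := ha
  obtain ⟨q, rfl⟩ := hf s
  let d := a - a * a * q
  have hd : f d = 0 := by
    rw [map_sub, map_mul, map_mul, hs, sub_self]
  have hxd : a * x * d = d := by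
    simp only [d, mul_sub, ← mul_assoc, hx]
  obtain ⟨u, hu⟩ : IsUnit (1 - x * d) := isUnit_of_map_unit f _ (by simp [hd])
  have hdu : a * a * (q * x * d) = d * u := by
    calc a * a * (q * x * d) = (a - d) * x * d := by simp only [d, sub_sub_cancel, mul_assoc]
      _ = d * u := by rw [hu, sub_mul, sub_mul, hxd, mul_one_sub, mul_assoc d]
  refine ⟨q + q * x * d * ↑u⁻¹, ?_⟩
  rw [mul_add, ← mul_assoc (a * a) (q * x * d), hdu, Units.mul_inv_cancel_right, add_sub_cancel]

theorem injOn_range_of_mul_self_mul_eq {R M : Type*} [Semiring R] [OrzechProperty R]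
    [AddCommMonoid M] [Module R M] [Module.Finite R M] {f g : Module.End R M}
    (h : f * f * g = f) : Set.InjOn f f.range := by
  let φ := f.rangeRestrict ∘ₗ f.range.subtype
  have hφ : Function.Surjective φ := by
    rintro ⟨_, v, rfl⟩
    exact ⟨⟨f (g v), g v, rfl⟩, Subtype.ext (LinearMap.congr_fun h v)⟩
  intro v hv w hw hvw
  have hvw' : φ ⟨v, hv⟩ = φ ⟨w, hw⟩ := Subtype.ext hvw
  exact congrArg Subtype.val (OrzechProperty.injective_of_surjective_endomorphism φ hφ hvw')

theorem moduleEnd_mul_mul_self_of_mul_self_mul_eq {R M : Type*} [Semiring R] [OrzechProperty R]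
    [AddCommMonoid M] [Module R M] [Module.Finite R M] {f g : Module.End R M}
    (h : f * f * g = f) : f * g * f = f :=
  LinearMap.ext fun v =>
    injOn_range_of_mul_self_mul_eq h ⟨g (f v), rfl⟩ ⟨v, rfl⟩ (LinearMap.congr_fun h (f v))

section Matrix

variable {n : Type*} [Fintype n]

theorem matrix_mul_mul_self_of_mul_self_mul_eq {R : Type*} [CommRing R] {A X : Matrix n n R}
    (h : A * A * X = A) : A * X * A = A := by
  classical
  apply (toLinAlgEquiv' (R := R)).injective
  simp only [map_mul]
  apply moduleEnd_mul_mul_self_of_mul_self_mul_eq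
  simp only [← map_mul, h]

theorem rank_mul_eq_rank_left_iff {l m K : Type*} [Finite l] [Fintype m] [Field K]
    (A : Matrix l n K) (B : Matrix n m K) :
    (A * B).rank = A.rank ↔ ∃ P : Matrix m n K, A * B * P = A := by
  classical
  constructor
  · intro h
    have hle : (A * B).mulVecLin.range ≤ A.mulVecLin.range := by
      rw [mulVecLin_mul]
      exact LinearMap.range_comp_le_range _ _
    have heq := Submodule.eq_of_le_of_finrank_eq hle h
    have hcol (j : n) : ∃ v, (A * B) *ᵥ v = A.col j := by
      have hj : A.col j ∈ A.mulVecLin.range := ⟨Pi.single j 1, mulVec_single_one A j⟩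
      rwa [← heq] at hj
    choose P hP using hcol
    exact ⟨(of P)ᵀ, ext_col hP⟩
  · rintro ⟨P, hP⟩
    refine (rank_mul_le_left A B).antisymm ?_
    calc A.rank = (A * B * P).rank := by rw [hP]
      _ ≤ (A * B).rank := rank_mul_le_left _ _

instance isLocalHom_mapMatrix [DecidableEq n] {R S : Type*} [CommRing R] [CommRing S] (φ : R →+* S)
    [IsLocalHom φ] : IsLocalHom (φ.mapMatrix : Matrix n n R →+* Matrix n n S) where
  map_nonunit A hA := by
    rw [isUnit_iff_isUnit_det, ← RingHom.map_det] at hA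
    exact (isUnit_iff_isUnit_det A).2 (isUnit_of_map_unit φ _ hA)

theorem mapMatrix_surjective [DecidableEq n] {R S : Type*} [NonAssocSemiring R]
    [NonAssocSemiring S] {f : R →+* S} (hf : Function.Surjective f) :
    Function.Surjective (f.mapMatrix : Matrix n n R →+* Matrix n n S) := fun B =>
  ⟨B.map (Function.surjInv hf), ext fun i j => Function.surjInv_eq hf (B i j)⟩

theorem isUnit_one_add_conjTranspose_mul_self [DecidableEq n] {K : Type*} [Field K]
    [PartialOrder K] [StarRing K] [StarOrderedRing K] (A : Matrix n n K) : IsUnit (1 + Aᴴ * A) :=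
  (PosDef.one.add_posSemidef (posSemidef_conjTranspose_mul_self A)).isUnit

theorem isUnit_one_add_conjTranspose_mul_self_of_isLocalHom [DecidableEq n] {R K : Type*}
    [CommRing R] [StarRing R] [Field K] [PartialOrder K] [StarRing K] [StarOrderedRing K]
    (φ : R →+* K) [IsLocalHom φ] (hφ : Function.Semiconj φ star star) (A : Matrix n n R) :
    IsUnit (1 + Aᴴ * A) := by
  apply isUnit_of_map_unit φ.mapMatrix
  rw [map_add, map_one, map_mul, RingHom.mapMatrix_apply, RingHom.mapMatrix_apply,
    conjTranspose_map φ hφ]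
  exact isUnit_one_add_conjTranspose_mul_self _

theorem stmt5_general {R K : Type*} [CommRing R] [StarRing R] [Field K] [PartialOrder K]
    [StarRing K] [StarOrderedRing K] (φ : R →+* K) [IsLocalHom φ]
    (hφ : Function.Surjective φ) (hstar : Function.Semiconj φ star star) (A : Matrix n n R) :
    (∃ X : Matrix n n R, A * A * X = A) ↔
      (A.map φ * A.map φ).rank = (A.map φ).rank ∧
        ∃ X : Matrix n n R, IsMoorePenroseInverse A X := by
  classical
  rw [rank_mul_eq_rank_left_iff]
  constructor
  · rintro ⟨X, hX⟩
    refine ⟨⟨X.map φ, ?_⟩, exists_isMoorePenroseInverse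
      (isUnit_one_add_conjTranspose_mul_self_of_isLocalHom φ hstar)
      (matrix_mul_mul_self_of_mul_self_mul_eq hX)⟩
    rw [← Matrix.map_mul, ← Matrix.map_mul, hX]
  · rintro ⟨hA, X, hX⟩
    exact exists_mul_self_mul_eq_of_map φ.mapMatrix (mapMatrix_surjective hφ) hX.mul_mul_self hA

end Matrix

instance isLocalHom_fstHom (S R M : Type*) [CommSemiring S] [Ring R] [AddCommGroup M] [Algebra S R]
    [Module S M] [Module R M] [Module Rᵐᵒᵖ M] [SMulCommClass R Rᵐᵒᵖ M] [IsScalarTower S R M]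
    [IsScalarTower S Rᵐᵒᵖ M] : IsLocalHom (TrivSqZeroExt.fstHom S R M).toRingHom where
  map_nonunit _ hx := TrivSqZeroExt.isUnit_iff_isUnit_fst.2 hx

/-- The trivial involution on `ℝ[ε]`, for which the conjugate transpose of a dual matrix is its
transpose by definition. -/
instance instStarRingDualNumberReal : StarRing (DualNumber ℝ) :=
  starRingOfComm

theorem isMoorePenroseInverse_iff_isDMPGI {n : ℕ} {M X : Matrix (Fin n) (Fin n) (DualNumber ℝ)} :
    IsMoorePenroseInverse M X ↔ IsDMPGI M X :=
  ⟨fun ⟨h₁, h₂, h₃, h₄⟩ => ⟨h₁, h₂, h₃, h₄⟩, fun ⟨h₁, h₂, h₃, h₄⟩ => ⟨h₁, h₂, h₃, h₄⟩⟩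

theorem dm_map_fstHom {n : ℕ} (A B : Matrix (Fin n) (Fin n) ℝ) :
    (dm A B).map (TrivSqZeroExt.fstHom ℝ ℝ ℝ).toRingHom = A := by
  ext i j
  simp [dm]

theorem stmt5 {n : ℕ} (A B : Matrix (Fin n) (Fin n) ℝ) :
    DualIndexOne (dm A B) ↔
      (A * A).rank = A.rank ∧
        ∃ X : Matrix (Fin n) (Fin n) (DualNumber ℝ), IsDMPGI (dm A B) X := by
  simpa only [DualIndexOne, dm_map_fstHom, isMoorePenroseInverse_iff_isDMPGI] using
    stmt5_general (TrivSqZeroExt.fstHom ℝ ℝ ℝ).toRingHom TrivSqZeroExt.fst_surjective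
      (fun _ => rfl) (dm A B)
end

section
/- Let Â = A + εB be an n×n dual matrix. Then Â has a dual core generalized inverse if and only if there exists a real n×n matrix C that is a core inverse of A (so A has index one) and (Iₙ − A·C)·B·(Iₙ − C·A) = 0. -/
open Matrix

/-!
If `p` is self-adjoint, `p * a = a` and `p = a * a * v`, then `a * v` is a right core inverse of
`a`. Given a right core inverse `c` of `a` with `c * a * c = c`, the orthogonal projection `a * c`
onto the range of `a` deforms to the dual projection `a * c + ε (y + y*)` with
`y = (1 - a * c) * b * c`. It always lies in `(a + ε b)² R[ε]`, and it fixes `a + ε b` as soon as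
`(1 - a * c) * b * (1 - c * a) = 0`. Conversely, this condition is what the `ε`-part of
`(1 - (a + ε b) * g) * (a + ε b) = 0` says modulo the left ideal `R a`, which `1 - c * a`
annihilates.
-/

open TrivSqZeroExt
open scoped DualNumber

/-- `c` is a right core inverse of `a` in a ring with involution. For square real matrices under
transposition these are the core inverses; in general `c` need not be unique, nor need
`c * a * c = c` hold. -/
structure IsRightCoreInverse {S : Type*} [Mul S] [Star S] (a c : S) : Prop where
  self_mul_inv_mul_self : a * c * a = a
  self_mul_inv_mul_inv : a * (c * c) = c
  isSelfAdjoint_self_mul_inv : IsSelfAdjoint (a * c)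

namespace IsRightCoreInverse

section Semigroup

variable {S : Type*} [Semigroup S] [Star S] {a c : S}

theorem of_isSelfAdjoint {p v : S} (hp : IsSelfAdjoint p) (hpa : p * a = a)
    (hv : a * a * v = p) : IsRightCoreInverse a (a * v) := by
  have hav : a * (a * v) = p := by rw [← mul_assoc, hv]
  refine ⟨by rw [hav, hpa], ?_, hav.symm ▸ hp⟩
  rw [← mul_assoc, hav, ← mul_assoc, hpa]

theorem exists_reflexive (h : IsRightCoreInverse a c) :
    ∃ c', IsRightCoreInverse a c' ∧ c' * a * c' = c' ∧ a * c' = a * c ∧ c' * a = c * a := by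
  have left_eq : a * (c * a * c) = a * c := by
    rw [← mul_assoc, ← mul_assoc, h.self_mul_inv_mul_self]
  have right_eq : c * a * c * a = c * a := by
    rw [mul_assoc, mul_assoc, ← mul_assoc a, h.self_mul_inv_mul_self]
  have reflexive : c * a * c * a * (c * a * c) = c * a * c := by
    rw [right_eq, mul_assoc c, left_eq, mul_assoc]
  have self_mul_sq : a * (c * a * c * (c * a * c)) = c * a * c := by
    calc a * (c * a * c * (c * a * c))
        = a * (c * a * c) * (c * a * c) := (mul_assoc ..).symm
      _ = a * (c * c) * (a * c) := by rw [left_eq]; simp only [mul_assoc]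
      _ = c * a * c := by rw [h.self_mul_inv_mul_inv, mul_assoc]
  refine ⟨c * a * c, ⟨?_, self_mul_sq, ?_⟩, reflexive, left_eq, right_eq⟩
  · rw [left_eq, h.self_mul_inv_mul_self]
  · rw [left_eq]
    exact h.isSelfAdjoint_self_mul_inv

theorem self_sq_mul_inv_sq (h : IsRightCoreInverse a c) : a * a * (c * c) = a * c := by
  rw [mul_assoc, h.self_mul_inv_mul_inv]

end Semigroup

theorem mul_mul_star_of_mul_eq {S : Type*} [Semigroup S] [StarMul S] {a c : S}
    (h : IsRightCoreInverse a c) {y : S} (hy : y * (a * c) = y) :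
    a * c * star y = star y := by
  rw [← h.isSelfAdjoint_self_mul_inv.star_eq, ← star_mul, hy]

section Ring

variable {R : Type*} [Ring R] {a c : R}

theorem one_sub_mul_mul_self [Star R] (h : IsRightCoreInverse a c) : (1 - a * c) * a = 0 := by
  rw [sub_mul, one_mul, h.self_mul_inv_mul_self, sub_self]

theorem self_mul_one_sub [Star R] (h : IsRightCoreInverse a c) : a * (1 - c * a) = 0 := by
  rw [mul_sub, mul_one, ← mul_assoc, h.self_mul_inv_mul_self, sub_self]

theorem star_one_sub_mul_mul_self [StarRing R] (h : IsRightCoreInverse a c) (z : R) :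
    star ((1 - a * c) * z) * a = 0 := by
  have hsa : star (1 - a * c) = 1 - a * c := by
    rw [star_sub, star_one, h.isSelfAdjoint_self_mul_inv.star_eq]
  rw [star_mul, hsa, mul_assoc, h.one_sub_mul_mul_self, mul_zero]

end Ring

end IsRightCoreInverse

/-- The involution `(a + ε b)* = a* + ε b*` on dual numbers; on dual matrices over `ℝ` it is
transposition. -/
instance dualNumberStar {R : Type*} [Star R] : Star R[ε] where
  star x := (star x.fst, star x.snd)

theorem isSelfAdjoint_dualNumber_iff {R : Type*} [Star R] {x : R[ε]} :
    IsSelfAdjoint x ↔ IsSelfAdjoint x.fst ∧ IsSelfAdjoint x.snd :=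
  TrivSqZeroExt.ext_iff

theorem IsRightCoreInverse.fst {R : Type*} [Semiring R] [Star R] {x g : R[ε]}
    (h : IsRightCoreInverse x g) : IsRightCoreInverse x.fst g.fst where
  self_mul_inv_mul_self := by simpa using congrArg TrivSqZeroExt.fst h.self_mul_inv_mul_self
  self_mul_inv_mul_inv := by simpa using congrArg TrivSqZeroExt.fst h.self_mul_inv_mul_inv
  isSelfAdjoint_self_mul_inv := by
    simpa using (isSelfAdjoint_dualNumber_iff.1 h.isSelfAdjoint_self_mul_inv).1

section DualNumber

variable {R : Type*} [Ring R]

/-- The first-order deformation of the projection `a * c`, for `c` a right core inverse of `a`, that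
belongs to `x = a + ε b`. When `c * a * c = c` and `(1 - a * c) * b * (1 - c * a) = 0`, it is the
orthogonal projection onto the right ideal `x R[ε]`. -/
def dualRangeProjection [Star R] (x : R[ε]) (c : R) : R[ε] :=
  let y := (1 - x.fst * c) * x.snd * c
  inl (x.fst * c) + inr (y + star y)

theorem fst_dualRangeProjection [Star R] (x : R[ε]) (c : R) :
    (dualRangeProjection x c).fst = x.fst * c := by
  simp [dualRangeProjection]

theorem snd_dualRangeProjection [Star R] (x : R[ε]) (c : R) :
    (dualRangeProjection x c).snd =
      (1 - x.fst * c) * x.snd * c + star ((1 - x.fst * c) * x.snd * c) := by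
  simp [dualRangeProjection]

variable {x : R[ε]} {c : R}

theorem isSelfAdjoint_dualRangeProjection [StarAddMonoid R] (hc : IsRightCoreInverse x.fst c) :
    IsSelfAdjoint (dualRangeProjection x c) := by
  rw [isSelfAdjoint_dualNumber_iff, fst_dualRangeProjection, snd_dualRangeProjection]
  exact ⟨hc.isSelfAdjoint_self_mul_inv, .add_star_self _⟩

theorem dualRangeProjection_mul_self [StarRing R] (hc : IsRightCoreInverse x.fst c)
    (hx : (1 - x.fst * c) * x.snd * (1 - c * x.fst) = 0) :
    dualRangeProjection x c * x = x := by
  set a := x.fst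
  set b := x.snd
  have hya : (1 - a * c) * b * c * a = (1 - a * c) * b := by
    rwa [mul_sub, mul_one, sub_eq_zero, ← mul_assoc, eq_comm] at hx
  have hsya : star ((1 - a * c) * b * c) * a = 0 := by
    rw [mul_assoc (1 - a * c)]
    exact hc.star_one_sub_mul_mul_self (b * c)
  have snd_eq : a * c * b + ((1 - a * c) * b * c + star ((1 - a * c) * b * c)) * a = b := by
    rw [add_mul, hya, hsya]
    noncomm_ring
  ext
  · rw [fst_mul, fst_dualRangeProjection, hc.self_mul_inv_mul_self]
  · rw [DualNumber.snd_mul, fst_dualRangeProjection, snd_dualRangeProjection, snd_eq]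

theorem exists_sq_mul_eq_dualRangeProjection [StarMul R] (hc : IsRightCoreInverse x.fst c)
    (hcac : c * x.fst * c = c) : ∃ v, x * x * v = dualRangeProjection x c := by
  set a := x.fst with ha
  set b := x.snd with hb
  set y := (1 - a * c) * b * c with hy
  have hsy : a * c * star y = star y :=
    hc.mul_mul_star_of_mul_eq (by rw [hy, mul_assoc _ c, ← mul_assoc c, hcac])
  have snd_eq : a * a * (c * c * (star y - a * b * (c * c) - b * c)) +
      (a * b + b * a) * (c * c) = y + star y := by
    calc a * a * (c * c * (star y - a * b * (c * c) - b * c)) + (a * b + b * a) * (c * c)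
        = a * c * (star y - a * b * (c * c) - b * c) + (a * b + b * a) * (c * c) := by
          rw [← mul_assoc, hc.self_sq_mul_inv_sq]
      _ = a * c * star y - a * c * a * b * (c * c) - a * c * b * c + a * b * (c * c) +
            b * (a * (c * c)) := by noncomm_ring
      _ = star y - a * c * b * c + b * c := by
          rw [hsy, hc.self_mul_inv_mul_self, hc.self_mul_inv_mul_inv]
          abel
      _ = y + star y := by
          rw [hy]
          noncomm_ring
  refine ⟨inl (c * c) + inr (c * c * (star y - a * b * (c * c) - b * c)), ?_⟩
  ext
  · simpa [fst_dualRangeProjection] using hc.self_sq_mul_inv_sq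
  · simpa [snd_dualRangeProjection, ← ha, ← hb, ← hy, add_mul] using snd_eq

theorem IsRightCoreInverse.one_sub_mul_snd_mul_one_sub [Star R] {g : R[ε]}
    (h : IsRightCoreInverse x g) :
    (1 - x.fst * g.fst) * x.snd * (1 - g.fst * x.fst) = 0 := by
  have snd_eq : x.fst * g.fst * x.snd + (x.fst * g.snd + x.snd * g.fst) * x.fst = x.snd := by
    simpa only [DualNumber.snd_mul, fst_mul] using
      congrArg TrivSqZeroExt.snd h.self_mul_inv_mul_self
  have hsub : (1 - x.fst * g.fst) * x.snd = (x.fst * g.snd + x.snd * g.fst) * x.fst := by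
    rw [sub_mul, one_mul, sub_eq_iff_eq_add', snd_eq]
  rw [hsub, mul_assoc, h.fst.self_mul_one_sub, mul_zero]

end DualNumber

theorem stmt11_general {R : Type*} [Ring R] [StarRing R] (x : R[ε]) :
    (∃ g, IsRightCoreInverse x g) ↔
      ∃ c, IsRightCoreInverse x.fst c ∧ (1 - x.fst * c) * x.snd * (1 - c * x.fst) = 0 := by
  constructor
  · rintro ⟨g, hg⟩
    exact ⟨g.fst, hg.fst, hg.one_sub_mul_snd_mul_one_sub⟩
  · rintro ⟨c, hc, hx⟩
    obtain ⟨c', hc', hreflexive, hac, hca⟩ := hc.exists_reflexive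
    rw [← hac, ← hca] at hx
    obtain ⟨v, hv⟩ := exists_sq_mul_eq_dualRangeProjection hc' hreflexive
    exact ⟨x * v, .of_isSelfAdjoint (isSelfAdjoint_dualRangeProjection hc')
      (dualRangeProjection_mul_self hc' hx) hv⟩

theorem dualNumberEquiv_transpose {m R : Type} [Fintype m] [DecidableEq m] [CommSemiring R]
    [Star R] [TrivialStar R] (M : Matrix m m R[ε]) :
    dualNumberEquiv Mᵀ = star (dualNumberEquiv M) :=
  TrivSqZeroExt.ext (conjTranspose_eq_transpose_of_trivial _).symm
    (conjTranspose_eq_transpose_of_trivial _).symm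

section Matrix

variable {n : ℕ}

theorem isCoreInv_iff_isRightCoreInverse (A C : Matrix (Fin n) (Fin n) ℝ) :
    IsCoreInv A C ↔ IsRightCoreInverse A C := by
  have hstar : star (A * C) = (A * C)ᵀ := conjTranspose_eq_transpose_of_trivial _
  rw [IsCoreInv, ← hstar]
  exact ⟨fun ⟨h₁, h₂, h₃⟩ ↦ ⟨h₁, h₂, h₃⟩, fun ⟨h₁, h₂, h₃⟩ ↦ ⟨h₁, h₂, h₃⟩⟩

theorem isDCGI_iff_isRightCoreInverse (M G : Matrix (Fin n) (Fin n) ℝ[ε]) :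
    IsDCGI M G ↔ IsRightCoreInverse (dualNumberEquiv M) (dualNumberEquiv G) := by
  rw [IsDCGI, ← dualNumberEquiv.injective.eq_iff, ← dualNumberEquiv.injective.eq_iff (b := G),
    ← dualNumberEquiv.injective.eq_iff (a := (M * G)ᵀ), dualNumberEquiv_transpose]
  simp only [map_mul]
  exact ⟨fun ⟨h₁, h₂, h₃⟩ ↦ ⟨h₁, h₂, h₃⟩, fun ⟨h₁, h₂, h₃⟩ ↦ ⟨h₁, h₂, h₃⟩⟩

theorem fst_dualNumberEquiv_dm (A B : Matrix (Fin n) (Fin n) ℝ) :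
    (dualNumberEquiv (dm A B)).fst = A := by
  ext
  simp [dm]

theorem snd_dualNumberEquiv_dm (A B : Matrix (Fin n) (Fin n) ℝ) :
    (dualNumberEquiv (dm A B)).snd = B := by
  ext
  simp [dm]

end Matrix

theorem stmt11 {n : ℕ} (A B : Matrix (Fin n) (Fin n) ℝ) :
    (∃ G : Matrix (Fin n) (Fin n) (DualNumber ℝ), IsDCGI (dm A B) G) ↔
      ∃ C : Matrix (Fin n) (Fin n) ℝ, IsCoreInv A C ∧
        (1 - A * C) * B * (1 - C * A) = 0 := by
  simpa only [isDCGI_iff_isRightCoreInverse, isCoreInv_iff_isRightCoreInverse,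
    ← dualNumberEquiv.surjective.exists, fst_dualNumberEquiv_dm, snd_dualNumberEquiv_dm]
    using stmt11_general (dualNumberEquiv (dm A B))
end

section
/- Let Â = A + εB be an n×n dual matrix and let P be the Moore–Penrose inverse of A. The following are equivalent: (1) Â has a dual core generalized inverse; (2) there exists a group inverse G of A and a real n×n matrix X with B·G·A + A·X·A + A·G·B = B; (3) rank(A²) = rank(A) and there exists a real n×n matrix X with B·P·A + A·X·A + A·P·B = B; (4) there exists a core inverse C of A and a real n×n matrix X with B·C·A + A·X·A + A·C·B = B. -/
open Matrix

/-!
For any inner inverse `Y` of `A`, the equation `B Y A + A X A + A Y B = B` is solvable in `X` if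
and only if `B = A U + V A` for some `U`, `V`, a condition which no longer involves `Y` and which
the `ε`-part of `ÂĜÂ = Â` forces. Conversely, let `C` be a core inverse of `A`, which exists when
`rank (A²) = rank A`. Conjugating by an orthogonal dual matrix `1 + εK`, with `K` skew-symmetric,
moves the column space of `A` onto that of `A + ε(A U + V A)`. This reduces the problem to
`A + εAZ`, whose dual core generalized inverse is `C - εCAZC`.
-/

lemma exists_mul_add_mul_add_mul_eq_iff {R : Type*} [Ring R] {a y : R} (hy : a * y * a = a)
    (b : R) : (∃ x, b * y * a + a * x * a + a * y * b = b) ↔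
      ∃ u v, a * u + v * a = b := by
  constructor
  · rintro ⟨x, hx⟩
    refine ⟨x * a + y * b, b * y, ?_⟩
    calc a * (x * a + y * b) + b * y * a = b * y * a + a * x * a + a * y * b := by noncomm_ring
      _ = b := hx
  · rintro ⟨u, v, rfl⟩
    refine ⟨-(u * y + y * v), ?_⟩
    calc _ = a * y * a * u + v * (a * y * a) := by noncomm_ring
      _ = a * u + v * a := by rw [hy]

lemma exists_skew_mul_add_mul_eq {m l R : Type*} [Fintype m] [CommRing R] {Q : Matrix m m R}
    {A : Matrix m l R} (hQ : Qᵀ = Q) (hA : Q * A = A) (V : Matrix m m R) :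
    ∃ K : Matrix m m R, Kᵀ = -K ∧ K * A + Q * V * A = V * A := by
  -- `T` is the component of `V` that moves the column space of `Q` out of itself.
  set T := V * Q - Q * V * Q with hT
  have transpose_T_mul : Tᵀ * A = 0 := by
    simp only [hT, transpose_sub, transpose_mul, hQ, Matrix.sub_mul, Matrix.mul_assoc, hA, sub_self]
  refine ⟨T - Tᵀ, by rw [transpose_sub, transpose_transpose, neg_sub], ?_⟩
  rw [Matrix.sub_mul, transpose_T_mul, sub_zero]
  simp only [hT, Matrix.sub_mul, Matrix.mul_assoc, hA, sub_add_cancel]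

section Rank

variable {m n l K : Type*} [Fintype n]

lemma exists_mul_mul_eq_of_rank_mul_eq [Fintype l] [Field K] {A : Matrix m n K} {B : Matrix n l K}
    (h : (A * B).rank = A.rank) : ∃ X : Matrix l n K, A * B * X = A := by
  classical
  have range_eq : LinearMap.range (A * B).mulVecLin = LinearMap.range A.mulVecLin :=
    Submodule.eq_of_le_of_finrank_eq
      (by rw [mulVecLin_mul]; exact LinearMap.range_comp_le_range _ _) h
  have col_mem (j : n) : ∃ x, (A * B) *ᵥ x = A.col j :=
    range_eq.ge ⟨Pi.single j 1, by simp⟩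
  choose x hx using col_mem
  exact ⟨(of x)ᵀ, ext_col hx⟩

lemma exists_inner_inverse_symm_mul [Fintype m] [Field K] [LinearOrder K] [IsStrictOrderedRing K]
    (A : Matrix m n K) : ∃ X : Matrix n m K, A * X * A = A ∧ (A * X)ᵀ = A * X := by
  obtain ⟨X, hX⟩ := exists_mul_mul_eq_of_rank_mul_eq
    (show (Aᵀ * A).rank = Aᵀ.rank by rw [rank_transpose_mul_self, rank_transpose])
  have hXt : Xᵀ * (Aᵀ * A) = A := by simpa [transpose_mul, mul_assoc] using congrArg transpose hX
  have symm : (A * X)ᵀ = A * X := by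
    conv_rhs => rw [← hXt, Matrix.mul_assoc, hX]
    rw [transpose_mul]
  exact ⟨X, by rw [← symm, transpose_mul, Matrix.mul_assoc, hXt], symm⟩

lemma rank_mul_eq_of_mul_mul_eq [Fintype l] [CommSemiring K] [StrongRankCondition K]
    {A : Matrix m n K} {B : Matrix n l K} {X : Matrix l n K} (h : A * B * X = A) :
    (A * B).rank = A.rank :=
  (rank_mul_le_left A B).antisymm <| by
    conv_lhs => rw [← h]
    exact rank_mul_le_left (A * B) X

end Rank

variable {n : ℕ} {A B C D G : Matrix (Fin n) (Fin n) ℝ}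

lemma IsGroupInv.rank_mul_self (hG : IsGroupInv A G) : (A * A).rank = A.rank :=
  rank_mul_eq_of_mul_mul_eq (X := G) <| by
    rw [mul_assoc, hG.2.2, ← mul_assoc, hG.1]

lemma exists_isGroupInv_of_rank_mul_self (h : (A * A).rank = A.rank) : ∃ G, IsGroupInv A G := by
  obtain ⟨Y, hY⟩ := exists_mul_mul_eq_of_rank_mul_eq h
  obtain ⟨W, hW⟩ := exists_mul_mul_eq_of_rank_mul_eq
    (show (Aᵀ * Aᵀ).rank = Aᵀ.rank by rw [← transpose_mul, rank_transpose, rank_transpose, h])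
  obtain ⟨Z, hZ⟩ : ∃ Z, Z * (A * A) = A :=
    ⟨Wᵀ, by simpa [transpose_mul] using congrArg transpose hW⟩
  have comm : Z * A = A * Y := by
    conv_lhs => rw [← hY, ← mul_assoc, hZ]
  have inner : A * Y * A = A := by rw [← comm, mul_assoc, hZ]
  have mul_left : A * (A * Y * Y) = A * Y := by rw [← mul_assoc, ← mul_assoc, hY]
  have mul_right : A * Y * Y * A = A * Y := by rw [← comm, mul_assoc Z, mul_assoc Z, inner]
  refine ⟨A * Y * Y, ?_, ?_, ?_⟩
  · rw [mul_left, inner]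
  · rw [mul_right, ← mul_assoc, ← mul_assoc, inner]
  · rw [mul_left, mul_right]

lemma IsCoreInv.rank_mul_self (hC : IsCoreInv A C) : (A * A).rank = A.rank :=
  rank_mul_eq_of_mul_mul_eq (X := C * C * A) <| by
    rw [mul_assoc, ← mul_assoc A (C * C), hC.2.1, ← mul_assoc, hC.1]

lemma exists_isCoreInv_of_rank_mul_self (h : (A * A).rank = A.rank) : ∃ C, IsCoreInv A C := by
  obtain ⟨Y, hY⟩ := exists_mul_mul_eq_of_rank_mul_eq h
  obtain ⟨X, inner, symm⟩ := exists_inner_inverse_symm_mul A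
  have mul_eq : A * (A * Y * X) = A * X := by rw [← mul_assoc, ← mul_assoc, hY]
  refine ⟨A * Y * X, ?_, ?_, ?_⟩
  · rw [mul_eq, inner]
  · rw [← mul_assoc, mul_eq, ← mul_assoc, ← mul_assoc, inner]
  · rw [mul_eq, symm]

lemma dm_mul_dm (A B C D : Matrix (Fin n) (Fin n) ℝ) :
    dm A B * dm C D = dm (A * C) (A * D + B * C) := by
  ext i j
  · simp [dm, mul_apply, TrivSqZeroExt.fst_sum]
  · simp [dm, mul_apply, TrivSqZeroExt.snd_sum, Finset.sum_add_distrib, mul_comm]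

lemma dm_transpose (A B : Matrix (Fin n) (Fin n) ℝ) : (dm A B)ᵀ = dm Aᵀ Bᵀ := rfl

lemma dm_one_zero : dm (1 : Matrix (Fin n) (Fin n) ℝ) 0 = 1 := by
  ext i j <;> by_cases h : i = j <;> simp [dm, one_apply, h]

lemma dm_inj : dm A B = dm C D ↔ A = C ∧ B = D := by
  simp only [← Matrix.ext_iff, dm, TrivSqZeroExt.ext_iff]
  simp [forall_and]

lemma exists_eq_dm (M : Matrix (Fin n) (Fin n) (DualNumber ℝ)) : ∃ A B, M = dm A B :=
  ⟨M.map TrivSqZeroExt.fst, M.map TrivSqZeroExt.snd, by ext <;> simp [dm]⟩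

lemma transpose_dm_one_mul_self_of_skew {K : Matrix (Fin n) (Fin n) ℝ} (hK : Kᵀ = -K) :
    (dm 1 K)ᵀ * dm 1 K = 1 := by
  rw [dm_transpose, dm_mul_dm, ← dm_one_zero, dm_inj]
  simp [hK]

lemma IsDCGI.conj {M N U : Matrix (Fin n) (Fin n) (DualNumber ℝ)} (h : IsDCGI M N)
    (hU : Uᵀ * U = 1) : IsDCGI (U * M * Uᵀ) (U * N * Uᵀ) := by
  have conj_mul (X Y : Matrix (Fin n) (Fin n) (DualNumber ℝ)) :
      U * X * Uᵀ * (U * Y * Uᵀ) = U * (X * Y) * Uᵀ := by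
    calc U * X * Uᵀ * (U * Y * Uᵀ) = U * X * (Uᵀ * U) * Y * Uᵀ := by simp only [mul_assoc]
      _ = U * (X * Y) * Uᵀ := by rw [hU, mul_one, mul_assoc U]
  obtain ⟨inner, outer, symm⟩ := h
  refine ⟨?_, ?_, ?_⟩
  · rw [conj_mul, conj_mul, inner]
  · rw [conj_mul, conj_mul, outer]
  · rw [conj_mul, transpose_mul, transpose_mul, symm, transpose_transpose, ← mul_assoc]

lemma IsCoreInv.isDCGI_dm_mul (hC : IsCoreInv A C) (Z : Matrix (Fin n) (Fin n) ℝ) :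
    IsDCGI (dm A (A * Z)) (dm C (-(C * A * Z * C))) := by
  obtain ⟨inner, outer, symm⟩ := hC
  have mul_eq : dm A (A * Z) * dm C (-(C * A * Z * C)) = dm (A * C) 0 := by
    rw [dm_mul_dm, dm_inj]
    refine ⟨rfl, ?_⟩
    calc _ = A * Z * C - A * C * A * Z * C := by noncomm_ring
      _ = 0 := by rw [inner, sub_self]
  have proj : A * C * C = C := by rw [mul_assoc, outer]
  refine ⟨?_, ?_, ?_⟩
  · rw [mul_eq, dm_mul_dm]
    simp [← mul_assoc, inner]
  · rw [← mul_assoc, mul_eq, dm_mul_dm]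
    simp [← mul_assoc, proj]
  · rw [mul_eq, dm_transpose, symm, transpose_zero]

lemma IsCoreInv.exists_isDCGI (hC : IsCoreInv A C) (U V : Matrix (Fin n) (Fin n) ℝ) :
    ∃ N, IsDCGI (dm A (A * U + V * A)) N := by
  obtain ⟨K, skew, hK⟩ := exists_skew_mul_add_mul_eq hC.2.2 hC.1 V
  have rotate : dm 1 K * dm A (A * (U + K + C * V * A)) * (dm 1 K)ᵀ = dm A (A * U + V * A) := by
    rw [dm_transpose, skew, transpose_one, dm_mul_dm, dm_mul_dm, dm_inj, ← hK]
    constructor <;> noncomm_ring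
  exact ⟨_, rotate ▸ (hC.isDCGI_dm_mul _).conj (transpose_dm_one_mul_self_of_skew skew)⟩

lemma IsDCGI.exists_isCoreInv_and_mul_add_mul
    {N : Matrix (Fin n) (Fin n) (DualNumber ℝ)} (h : IsDCGI (dm A B) N) :
    (∃ C, IsCoreInv A C) ∧ ∃ U V, A * U + V * A = B := by
  obtain ⟨C, D, rfl⟩ := exists_eq_dm N
  simp only [IsDCGI, dm_mul_dm, dm_transpose, dm_inj] at h
  obtain ⟨⟨inner, inner_eps⟩, ⟨outer, -⟩, ⟨symm, -⟩⟩ := h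
  refine ⟨⟨C, inner, outer, symm⟩, C * B + D * A, B * C, ?_⟩
  conv_rhs => rw [← inner_eps]
  noncomm_ring

lemma exists_isDCGI_iff {Y : Matrix (Fin n) (Fin n) ℝ} (hY : A * Y * A = A) :
    (∃ N, IsDCGI (dm A B) N) ↔
      (A * A).rank = A.rank ∧ ∃ X, B * Y * A + A * X * A + A * Y * B = B := by
  rw [exists_mul_add_mul_add_mul_eq_iff hY]
  constructor
  · rintro ⟨N, hN⟩
    obtain ⟨⟨C, hC⟩, decomp⟩ := hN.exists_isCoreInv_and_mul_add_mul
    exact ⟨hC.rank_mul_self, decomp⟩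
  · rintro ⟨hr, U, V, rfl⟩
    obtain ⟨C, hC⟩ := exists_isCoreInv_of_rank_mul_self hr
    exact hC.exists_isDCGI U V

theorem stmt12_general {n : ℕ} (A B P : Matrix (Fin n) (Fin n) ℝ)
    (hP : A * P * A = A) :
    ((∃ G : Matrix (Fin n) (Fin n) (DualNumber ℝ), IsDCGI (dm A B) G) ↔
        ∃ G X : Matrix (Fin n) (Fin n) ℝ, IsGroupInv A G ∧
          B * G * A + A * X * A + A * G * B = B) ∧
    ((∃ G : Matrix (Fin n) (Fin n) (DualNumber ℝ), IsDCGI (dm A B) G) ↔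
        (A * A).rank = A.rank ∧
          ∃ X : Matrix (Fin n) (Fin n) ℝ,
            B * P * A + A * X * A + A * P * B = B) ∧
    ((∃ G : Matrix (Fin n) (Fin n) (DualNumber ℝ), IsDCGI (dm A B) G) ↔
        ∃ C X : Matrix (Fin n) (Fin n) ℝ, IsCoreInv A C ∧
          B * C * A + A * X * A + A * C * B = B) := by
  have rank_eq (h : ∃ N, IsDCGI (dm A B) N) : (A * A).rank = A.rank :=
    ((exists_isDCGI_iff hP).1 h).1
  refine ⟨⟨fun h ↦ ?_, ?_⟩, exists_isDCGI_iff hP, ⟨fun h ↦ ?_, ?_⟩⟩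
  · obtain ⟨G, hG⟩ := exists_isGroupInv_of_rank_mul_self (rank_eq h)
    obtain ⟨-, X, hX⟩ := (exists_isDCGI_iff hG.1).1 h
    exact ⟨G, X, hG, hX⟩
  · rintro ⟨G, X, hG, hX⟩
    exact (exists_isDCGI_iff hG.1).2 ⟨hG.rank_mul_self, X, hX⟩
  · obtain ⟨C, hC⟩ := exists_isCoreInv_of_rank_mul_self (rank_eq h)
    obtain ⟨-, X, hX⟩ := (exists_isDCGI_iff hC.1).1 h
    exact ⟨C, X, hC, hX⟩
  · rintro ⟨C, X, hC, hX⟩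
    exact (exists_isDCGI_iff hC.1).2 ⟨hC.rank_mul_self, X, hX⟩

theorem stmt12 {n : ℕ} (A B P : Matrix (Fin n) (Fin n) ℝ)
    (hP : IsMoorePenrose A P) :
    ((∃ G : Matrix (Fin n) (Fin n) (DualNumber ℝ), IsDCGI (dm A B) G) ↔
        ∃ G X : Matrix (Fin n) (Fin n) ℝ, IsGroupInv A G ∧
          B * G * A + A * X * A + A * G * B = B) ∧
    ((∃ G : Matrix (Fin n) (Fin n) (DualNumber ℝ), IsDCGI (dm A B) G) ↔
        (A * A).rank = A.rank ∧
          ∃ X : Matrix (Fin n) (Fin n) ℝ,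
            B * P * A + A * X * A + A * P * B = B) ∧
    ((∃ G : Matrix (Fin n) (Fin n) (DualNumber ℝ), IsDCGI (dm A B) G) ↔
        ∃ C X : Matrix (Fin n) (Fin n) ℝ, IsCoreInv A C ∧
          B * C * A + A * X * A + A * C * B = B) :=
  stmt12_general A B P hP.1
end
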